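/- Let N be a positive integer, h = (h₁,h₂) ∈ ℤ², and t > 0. Then for every τ ∈ H the series defining Θ_h(τ,t) and Θ̃_h(τ,t) converge absolutely, and the function τ ↦ Θ̃_h(τ,t) satisfies ξ(Θ̃_h(·,t))(τ) = Θ_h(τ,t), i.e. 2iv·conj( ∂/∂conj(τ) Θ̃_h(τ,t) ) = Θ_h(τ,t). -/

import Mathlib

open MeasureTheory Filter Set

noncomputable section

/-- `e(z) = exp(2πiz)` -/
def eC (z : ℂ) : ℂ := Complex.exp (2 * Real.pi * Complex.I * z)

/-- The complementary error function `erfc(x) = (2/√π)∫_x^∞ e^{-r²} dr`. -/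
def erfc (x : ℝ) : ℝ := (2 / Real.sqrt Real.pi) * ∫ r in Set.Ioi x, Real.exp (-(r ^ 2))

/-- `φ_τ(x,y) = √(2v)·x·e((x²/2)τ - (y²/2)·conj τ)` where `v = Im τ`. -/
def phi (τ : ℂ) (x y : ℝ) : ℂ :=
  (Real.sqrt (2 * τ.im) : ℂ) * (x : ℂ) *
    eC (((x : ℂ) ^ 2 / 2) * τ - ((y : ℂ) ^ 2 / 2) * (starRingEnd ℂ) τ)

/-- `φ*_τ(x,y) = e(((y²-x²)/2)τ)·sgn(x)·erfc(√(2πv)|x|)`. -/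
def phiStar (τ : ℂ) (x y : ℝ) : ℂ :=
  eC ((((y : ℂ) ^ 2 - (x : ℂ) ^ 2) / 2) * τ) * (Real.sign x : ℂ) *
    (erfc (Real.sqrt (2 * Real.pi * τ.im) * |x|) : ℂ)

/-- `φ⁺_τ(x,y) = e(((y²-x²)/2)τ)·sgn(x)·1_{y²>x²}`. -/
def phiPlus (τ : ℂ) (x y : ℝ) : ℂ :=
  eC ((((y : ℂ) ^ 2 - (x : ℂ) ^ 2) / 2) * τ) * (Real.sign x : ℂ) *
    (if x ^ 2 < y ^ 2 then 1 else 0)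

/-- `φ̃_τ = φ⁺_τ - φ*_τ`. -/
def phiTilde (τ : ℂ) (x y : ℝ) : ℂ := phiPlus τ x y - phiStar τ x y

/-- The isometry `ι_t(x₁,x₂) = ((t⁻¹x₁+tx₂)/√(2N), (t⁻¹x₁-tx₂)/√(2N))`. -/
def iota (N : ℕ) (t x₁ x₂ : ℝ) : ℝ × ℝ :=
  ((t⁻¹ * x₁ + t * x₂) / Real.sqrt (2 * N), (t⁻¹ * x₁ - t * x₂) / Real.sqrt (2 * N))

/-- `⟨x⟩ ∈ (0,1]`, the representative of `x` modulo `ℤ` lying in `(0,1]`. -/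
def frac01 (x : ℝ) : ℝ := x - ⌈x⌉ + 1

/-- The constant coefficient `c_h(0)`. -/
def cH0 (N : ℕ) (h : ℤ × ℤ) : ℝ :=
  if ¬ ((N : ℤ) ∣ h.1) ∧ (N : ℤ) ∣ h.2 then 1 / 2 - frac01 ((h.1 : ℝ) / N)
  else if ((N : ℤ) ∣ h.1) ∧ ¬ ((N : ℤ) ∣ h.2) then 1 / 2 - frac01 ((h.2 : ℝ) / N)
  else 0

/-- `Θ_h(τ,t) = Σ_{x ≡ h (N)} φ_τ(ι_t(x₁,x₂))`; the index `p ∈ ℤ²` corresponds to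
`x_j = h_j + N·p_j`. -/
def Theta (N : ℕ) (h : ℤ × ℤ) (τ : ℂ) (t : ℝ) : ℂ :=
  ∑' p : ℤ × ℤ,
    phi τ (iota N t ((h.1 + N * p.1 : ℤ) : ℝ) ((h.2 + N * p.2 : ℤ) : ℝ)).1
          (iota N t ((h.1 + N * p.1 : ℤ) : ℝ) ((h.2 + N * p.2 : ℤ) : ℝ)).2

/-- `Θ̃_h(τ,t) = c_h(0) + Σ_{x ≡ h (N)} φ̃_τ(ι_t(x₁,x₂))`. -/
def ThetaTilde (N : ℕ) (h : ℤ × ℤ) (τ : ℂ) (t : ℝ) : ℂ :=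
  (cH0 N h : ℂ) + ∑' p : ℤ × ℤ,
    phiTilde τ (iota N t ((h.1 + N * p.1 : ℤ) : ℝ) ((h.2 + N * p.2 : ℤ) : ℝ)).1
               (iota N t ((h.1 + N * p.1 : ℤ) : ℝ) ((h.2 + N * p.2 : ℤ) : ℝ)).2

/-- The Wirtinger derivative `∂f/∂conj(τ) = (1/2)(∂f/∂u + i·∂f/∂v)`. -/
def dbar (f : ℂ → ℂ) (τ : ℂ) : ℂ :=
  (1 / 2) * (fderiv ℝ f τ 1 + Complex.I * fderiv ℝ f τ Complex.I)

/-- The `ξ`-operator in weight one: `ξ(f)(τ) = 2iv·conj(∂f/∂conj(τ))`. -/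
def xi (f : ℂ → ℂ) (τ : ℂ) : ℂ :=
  2 * Complex.I * (τ.im : ℂ) * (starRingEnd ℂ) (dbar f τ)

lemma gauss_int : Integrable (fun r : ℝ => Real.exp (-(r ^ 2))) := by
  have := integrable_exp_neg_mul_sq (b := 1) one_pos
  simpa using this

lemma erfc_hasDerivAt (z : ℝ) :
    HasDerivAt erfc (-((2 / Real.sqrt Real.pi) * Real.exp (-(z ^ 2)))) z := by
  have h1 : erfc = fun x => (2 / Real.sqrt Real.pi) *
      ((∫ r in Set.Ioi (0:ℝ), Real.exp (-(r ^ 2))) - ∫ r in (0:ℝ)..x, Real.exp (-(r ^ 2))) := by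
    funext x
    have := intervalIntegral.integral_interval_add_Ioi (a := 0) (b := x)
      gauss_int.integrableOn gauss_int.integrableOn
    unfold erfc
    rw [← this]; ring
  rw [h1]
  have h2 : HasDerivAt (fun x => ∫ r in (0:ℝ)..x, Real.exp (-(r ^ 2))) (Real.exp (-(z ^ 2))) z := by
    have hc : Continuous (fun r : ℝ => Real.exp (-(r ^ 2))) := by fun_prop
    exact hc.integral_hasStrictDerivAt 0 z |>.hasDerivAt
  have h3 := (h2.const_sub (∫ r in Set.Ioi (0:ℝ), Real.exp (-(r ^ 2)))).const_mul
    (2 / Real.sqrt Real.pi)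
  simpa using h3

lemma erfc_nonneg (z : ℝ) : 0 ≤ erfc z := by
  unfold erfc
  have : 0 ≤ ∫ r in Set.Ioi z, Real.exp (-(r ^ 2)) :=
    integral_nonneg fun r => (Real.exp_pos _).le
  positivity

lemma erfc_le (z : ℝ) (hz : 0 ≤ z) : erfc z ≤ Real.exp (-(z ^ 2)) := by
  have h1 : ∫ r in Set.Ioi z, Real.exp (-(r ^ 2)) =
      ∫ s in Set.Ioi (0:ℝ), Real.exp (-((s + z) ^ 2)) := by
    have := (measurePreserving_add_right volume z).setIntegral_preimage_emb
      (measurableEmbedding_addRight z) (fun r : ℝ => Real.exp (-(r ^ 2))) (Set.Ioi z)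
    rw [← this]
    simp
  have h2 : ∫ s in Set.Ioi (0:ℝ), Real.exp (-((s + z) ^ 2)) ≤
      ∫ s in Set.Ioi (0:ℝ), Real.exp (-(z ^ 2)) * Real.exp (-(s ^ 2)) := by
    apply setIntegral_mono_on
    · exact (gauss_int.comp_add_right z).integrableOn
    · exact (gauss_int.const_mul _).integrableOn
    · exact measurableSet_Ioi
    · intro s hs
      rw [← Real.exp_add]
      apply Real.exp_le_exp.mpr
      have : 0 ≤ s * z := mul_nonneg (le_of_lt hs) hz
      nlinarith
  have h3 : ∫ s in Set.Ioi (0:ℝ), Real.exp (-(s ^ 2)) = Real.sqrt Real.pi / 2 := by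
    have := integral_gaussian_Ioi 1
    simpa using this
  rw [integral_const_mul, h3] at h2
  unfold erfc
  rw [h1]
  have hp : 0 < Real.sqrt Real.pi := Real.sqrt_pos.mpr Real.pi_pos
  calc _ ≤ (2 / Real.sqrt Real.pi) * (Real.exp (-(z ^ 2)) * (Real.sqrt Real.pi / 2)) := by gcongr
    _ = _ := by field_simp

/-- the coefficient of `dv` in the derivative of `phiTilde` -/
def gC (τ : ℂ) (x y : ℝ) : ℂ :=
  eC ((((y : ℂ) ^ 2 - (x : ℂ) ^ 2) / 2) * τ) *
    ((x * (Real.sqrt 2 / Real.sqrt τ.im) * Real.exp (-(2 * Real.pi * τ.im * x ^ 2)) : ℝ) : ℂ)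

/-- the derivative of `phiTilde` -/
def dPhi (τ : ℂ) (x y : ℝ) : ℂ →L[ℝ] ℂ :=
  ((2 * Real.pi * Complex.I * (((y : ℂ) ^ 2 - (x : ℂ) ^ 2) / 2)) * phiTilde τ x y) •
    (ContinuousLinearMap.id ℝ ℂ) +
  gC τ x y • (Complex.ofRealCLM.comp Complex.imCLM)

lemma sign_mul_abs' (x : ℝ) : Real.sign x * |x| = x := by
  rcases lt_trichotomy x 0 with h | h | h
  · rw [Real.sign_of_neg h, abs_of_neg h]; ring
  · simp [h]
  · rw [Real.sign_of_pos h, abs_of_pos h]; ring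

lemma radial_deriv (x c v : ℝ) (hv : 0 < v) :
    HasDerivAt (fun w : ℝ => Real.sign x * c - Real.sign x * erfc (Real.sqrt (2 * Real.pi * w) * |x|))
      (x * (Real.sqrt 2 / Real.sqrt v) * Real.exp (-(2 * Real.pi * v * x ^ 2))) v := by
  have hpv : 0 < 2 * Real.pi * v := by positivity
  have h1 : HasDerivAt (fun w : ℝ => 2 * Real.pi * w) (2 * Real.pi) v := by
    simpa using (hasDerivAt_id v).const_mul (2 * Real.pi)
  have h2 := (h1.sqrt hpv.ne').mul_const |x|
  have h3 := (((erfc_hasDerivAt _).comp v h2).const_mul (Real.sign x)).const_sub (Real.sign x * c)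
  refine h3.congr_deriv ?_
  have e1 : (Real.sqrt (2 * Real.pi * v) * |x|) ^ 2 = 2 * Real.pi * v * x ^ 2 := by
    rw [mul_pow, Real.sq_sqrt hpv.le, sq_abs]
  rw [e1]
  have e2 : Real.sqrt (2 * Real.pi * v) = Real.sqrt 2 * Real.sqrt Real.pi * Real.sqrt v := by
    rw [Real.sqrt_mul (by positivity), Real.sqrt_mul (by positivity)]
  rw [e2]
  have a1 : 0 < Real.sqrt 2 := by positivity
  have a2 : 0 < Real.sqrt Real.pi := Real.sqrt_pos.mpr Real.pi_pos
  have a3 : 0 < Real.sqrt v := Real.sqrt_pos.mpr hv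
  have b1 : Real.sqrt 2 * Real.sqrt 2 = 2 := Real.mul_self_sqrt (by norm_num)
  have b2 : Real.sqrt Real.pi * Real.sqrt Real.pi = Real.pi := Real.mul_self_sqrt Real.pi_pos.le
  set E := Real.exp (-(2 * Real.pi * v * x ^ 2))
  have : 2 * Real.pi / (2 * (Real.sqrt 2 * Real.sqrt Real.pi * Real.sqrt v)) =
      Real.sqrt 2 * Real.sqrt Real.pi / (2 * Real.sqrt v) := by
    rw [div_eq_div_iff (by positivity) (by positivity)]
    linear_combination (-4 * Real.sqrt v * Real.pi) * b1 / 2 * 1 + (-2 * Real.sqrt v * (Real.sqrt 2 * Real.sqrt 2)) * b2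
  rw [this]
  have hx := sign_mul_abs' x
  field_simp
  linear_combination E * hx

lemma phiTilde_eq (τ : ℂ) (x y : ℝ) : phiTilde τ x y =
    eC ((((y : ℂ) ^ 2 - (x : ℂ) ^ 2) / 2) * τ) *
      ((Real.sign x * (if x ^ 2 < y ^ 2 then 1 else 0) -
        Real.sign x * erfc (Real.sqrt (2 * Real.pi * τ.im) * |x|) : ℝ) : ℂ) := by
  unfold phiTilde phiPlus phiStar
  split_ifs <;> push_cast <;> ring

lemma phiTilde_hasFDerivAt (τ : ℂ) (hτ : 0 < τ.im) (x y : ℝ) :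
    HasFDerivAt (fun σ => phiTilde σ x y) (dPhi τ x y) τ := by
  have h1 : HasDerivAt (fun σ : ℂ => eC ((((y : ℂ) ^ 2 - (x : ℂ) ^ 2) / 2) * σ))
      ((2 * Real.pi * Complex.I * (((y : ℂ) ^ 2 - (x : ℂ) ^ 2) / 2)) *
        eC ((((y : ℂ) ^ 2 - (x : ℂ) ^ 2) / 2) * τ)) τ := by
    unfold eC
    have := (((hasDerivAt_id τ).const_mul (((y : ℂ) ^ 2 - (x : ℂ) ^ 2) / 2)).const_mul
      (2 * Real.pi * Complex.I)).cexp
    refine this.congr_deriv ?_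
    simp only [id]
    ring
  have h1' := h1.hasFDerivAt.restrictScalars ℝ
  have h2 := (radial_deriv x (if x ^ 2 < y ^ 2 then 1 else 0) τ.im hτ).hasFDerivAt.comp τ
    Complex.imCLM.hasFDerivAt
  have h3 := Complex.ofRealCLM.hasFDerivAt.comp τ h2
  have h4 := h1'.mul h3
  have he : (fun σ => phiTilde σ x y) = fun σ => eC ((((y : ℂ) ^ 2 - (x : ℂ) ^ 2) / 2) * σ) *
      ((Real.sign x * (if x ^ 2 < y ^ 2 then 1 else 0) -
        Real.sign x * erfc (Real.sqrt (2 * Real.pi * σ.im) * |x|) : ℝ) : ℂ) := by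
    funext σ; exact phiTilde_eq σ x y
  rw [he]
  refine HasFDerivAt.congr_fderiv h4 ?_
  ext z
  simp [dPhi, gC, phiTilde_eq]
  ring

lemma phi_eq (τ : ℂ) (hτ : 0 < τ.im) (x y : ℝ) :
    phi τ x y = 2 * Complex.I * (τ.im : ℂ) * (starRingEnd ℂ)
      ((1 / 2) * (dPhi τ x y 1 + Complex.I * dPhi τ x y Complex.I)) := by
  have e0 : dPhi τ x y 1 + Complex.I * dPhi τ x y Complex.I = Complex.I * gC τ x y := by
    simp [dPhi]
    linear_combination (2 * Real.pi * Complex.I * (((y : ℂ) ^ 2 - (x : ℂ) ^ 2) / 2)) *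
      phiTilde τ x y * Complex.I_mul_I
  rw [e0]
  have hs : (Real.sqrt τ.im : ℂ) ≠ 0 := by
    exact_mod_cast (Real.sqrt_pos.mpr hτ).ne'
  have hs2 : (Real.sqrt τ.im : ℂ) * (Real.sqrt τ.im : ℂ) = τ.im := by
    exact_mod_cast Real.mul_self_sqrt hτ.le
  have e1 : (starRingEnd ℂ) (eC ((((y : ℂ) ^ 2 - (x : ℂ) ^ 2) / 2) * τ)) *
      ((Real.exp (-(2 * Real.pi * τ.im * x ^ 2)) : ℝ) : ℂ) =
      eC (((x : ℂ) ^ 2 / 2) * τ - ((y : ℂ) ^ 2 / 2) * (starRingEnd ℂ) τ) := by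
    unfold eC
    rw [← Complex.exp_conj, Complex.ofReal_exp, ← Complex.exp_add]
    congr 1
    simp only [map_mul, map_sub, map_div₀, map_pow, Complex.conj_ofReal, Complex.conj_I, map_ofNat]
    push_cast
    apply Complex.ext <;> simp [pow_two] <;> ring
  unfold phi gC
  rw [← e1, Real.sqrt_mul (by norm_num)]
  simp only [map_mul, map_div₀, Complex.conj_ofReal, Complex.conj_I, map_ofNat, map_one]
  push_cast
  field_simp
  rw [← hs2]
  ring_nf
  simp only [Complex.I_sq]
  ring

lemma norm_eC_mul (τ : ℂ) (x y : ℝ) : ‖eC ((((y : ℂ) ^ 2 - (x : ℂ) ^ 2) / 2) * τ)‖ =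
    Real.exp (-(Real.pi * τ.im * (y ^ 2 - x ^ 2))) := by
  unfold eC
  rw [Complex.norm_exp]
  congr 1
  have : (2 * Real.pi * Complex.I * ((((y : ℂ) ^ 2 - (x : ℂ) ^ 2) / 2) * τ)) =
    ((Real.pi * (y ^ 2 - x ^ 2) : ℝ) : ℂ) * (Complex.I * τ) := by push_cast; ring
  rw [this, Complex.re_ofReal_mul]
  simp
  ring

/-- `norm_phiTilde_le`: basic bound -/
lemma norm_phiTilde_le (τ : ℂ) (hτ : 0 < τ.im) (x y : ℝ) : ‖phiTilde τ x y‖ ≤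
    (if x ^ 2 < y ^ 2 then Real.exp (-(Real.pi * τ.im * (y ^ 2 - x ^ 2))) else 0) +
      Real.exp (-(Real.pi * τ.im * (x ^ 2 + y ^ 2))) := by
  have hsg : |Real.sign x| ≤ 1 := by
    rcases Real.sign_apply_eq x with h | h | h <;> simp [h]
  unfold phiTilde
  refine (norm_sub_le _ _).trans (add_le_add ?_ ?_)
  · unfold phiPlus
    split_ifs
    · rw [mul_one, norm_mul, norm_eC_mul, Complex.norm_real, Real.norm_eq_abs]
      exact mul_le_of_le_one_right (Real.exp_pos _).le hsg
    · simp
  · unfold phiStar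
    rw [norm_mul, norm_mul, norm_eC_mul, Complex.norm_real, Complex.norm_real, Real.norm_eq_abs,
      Real.norm_eq_abs, abs_of_nonneg (erfc_nonneg _)]
    have hpv : 0 < 2 * Real.pi * τ.im := by positivity
    have e1 : (Real.sqrt (2 * Real.pi * τ.im) * |x|) ^ 2 = 2 * Real.pi * τ.im * x ^ 2 := by
      rw [mul_pow, Real.sq_sqrt hpv.le, sq_abs]
    have h2 := erfc_le (Real.sqrt (2 * Real.pi * τ.im) * |x|) (by positivity)
    rw [e1] at h2
    calc _ ≤ Real.exp (-(Real.pi * τ.im * (y ^ 2 - x ^ 2))) * 1 *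
          Real.exp (-(2 * Real.pi * τ.im * x ^ 2)) := by
          gcongr
          exact erfc_nonneg _
      _ = _ := by
        rw [mul_one, ← Real.exp_add]; congr 1; ring

lemma norm_gC_le (τ : ℂ) (hτ : 0 < τ.im) (x y : ℝ) : ‖gC τ x y‖ =
    |x| * (Real.sqrt 2 / Real.sqrt τ.im) * Real.exp (-(Real.pi * τ.im * (x ^ 2 + y ^ 2))) := by
  unfold gC
  rw [norm_mul, norm_eC_mul, Complex.norm_real, Real.norm_eq_abs, abs_mul, abs_mul,
    abs_of_pos (Real.exp_pos _), abs_of_nonneg (by positivity : 0 ≤ Real.sqrt 2 / Real.sqrt τ.im)]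
  have : Real.exp (-(Real.pi * τ.im * (x ^ 2 + y ^ 2))) =
    Real.exp (-(Real.pi * τ.im * (y ^ 2 - x ^ 2))) * Real.exp (-(2 * Real.pi * τ.im * x ^ 2)) := by
    rw [← Real.exp_add]; congr 1; ring
  rw [this]; ring

/-- absorbing a linear factor -/
lemma lin_exp (v w b : ℝ) (hv : 0 < v) (hw : v ≤ w) (hb : 0 ≤ b) :
    b * Real.exp (-(w * b)) ≤ (2 / v) * Real.exp (-(v / 2 * b)) := by
  have h1 : v / 2 * b ≤ Real.exp (v / 2 * b) := by
    have := Real.add_one_le_exp (v / 2 * b); linarith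
  have h2 : b ≤ 2 / v * Real.exp (v / 2 * b) := by
    calc b = 2 / v * (v / 2 * b) := by field_simp
      _ ≤ _ := by gcongr
  calc b * Real.exp (-(w * b)) ≤ (2 / v * Real.exp (v / 2 * b)) * Real.exp (-(v * b)) := by gcongr
    _ = _ := by rw [mul_assoc, ← Real.exp_add]; congr 2; ring

lemma dPhi_bound (v : ℝ) (hv : 0 < v) : ∃ C : ℝ, 0 ≤ C ∧ ∀ (x y K : ℝ), K ≤ x ^ 2 + y ^ 2 →
    (x ^ 2 < y ^ 2 → K ≤ y ^ 2 - x ^ 2) → ∀ τ : ℂ, v ≤ τ.im →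
    ‖phiTilde τ x y‖ ≤ C * Real.exp (-(v / 2 * Real.pi * K)) ∧
    ‖dPhi τ x y‖ ≤ C * Real.exp (-(v / 2 * Real.pi * K)) := by
  refine ⟨2 + 4 / v + (1 + 2 / v) * (Real.sqrt 2 / Real.sqrt v), by positivity, ?_⟩
  intro x y K hK1 hK2 τ hτ
  have hpi := Real.pi_pos
  have hpi3 := Real.pi_gt_three
  have hτ0 : 0 < τ.im := hv.trans_le hτ
  set E := Real.exp (-(v / 2 * Real.pi * K)) with hE
  have hEp : 0 < E := Real.exp_pos _
  set b := Real.pi * (x ^ 2 + y ^ 2) with hb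
  have hb0 : 0 ≤ b := by positivity
  have hbE : Real.exp (-(v / 2 * b)) ≤ E := by
    apply Real.exp_le_exp.mpr
    have : v / 2 * Real.pi * K ≤ v / 2 * Real.pi * (x ^ 2 + y ^ 2) := by gcongr
    rw [hb]; linarith
  have hS : Real.exp (-(Real.pi * τ.im * (x ^ 2 + y ^ 2))) = Real.exp (-(τ.im * b)) := by
    congr 1; rw [hb]; ring
  have hS1 : Real.exp (-(τ.im * b)) ≤ E := by
    refine le_trans (Real.exp_le_exp.mpr ?_) hbE
    have : v / 2 * b ≤ τ.im * b := by gcongr; linarith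
    linarith
  have hS2 : b * Real.exp (-(τ.im * b)) ≤ 2 / v * E :=
    (lin_exp v τ.im b hv hτ hb0).trans (by gcongr)
  have hab : |Real.pi * (y ^ 2 - x ^ 2)| ≤ b := by
    rw [abs_mul, abs_of_pos hpi, hb]
    gcongr
    rw [abs_le]; constructor <;> nlinarith [sq_nonneg x, sq_nonneg y]
  have hP : (if x ^ 2 < y ^ 2 then Real.exp (-(Real.pi * τ.im * (y ^ 2 - x ^ 2))) else 0) ≤ E ∧
      |Real.pi * (y ^ 2 - x ^ 2)| *
      (if x ^ 2 < y ^ 2 then Real.exp (-(Real.pi * τ.im * (y ^ 2 - x ^ 2))) else 0) ≤ 2 / v * E := by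
    split_ifs with hxy
    · set a := Real.pi * (y ^ 2 - x ^ 2) with ha
      have ha0 : 0 ≤ a := mul_nonneg hpi.le (by linarith)
      have haE : Real.exp (-(v / 2 * a)) ≤ E := by
        apply Real.exp_le_exp.mpr
        have hK := hK2 hxy
        have : v / 2 * Real.pi * K ≤ v / 2 * Real.pi * (y ^ 2 - x ^ 2) := by gcongr
        rw [ha]; linarith
      have hS : Real.exp (-(Real.pi * τ.im * (y ^ 2 - x ^ 2))) = Real.exp (-(τ.im * a)) := by
        congr 1; rw [ha]; ring
      rw [hS, abs_of_nonneg ha0]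
      constructor
      · refine le_trans (Real.exp_le_exp.mpr ?_) haE
        have : v / 2 * a ≤ τ.im * a := by gcongr; linarith
        linarith
      · exact (lin_exp v τ.im a hv hτ ha0).trans (by gcongr)
    · simp only [mul_zero]
      exact ⟨hEp.le, by positivity⟩
  have hphi := norm_phiTilde_le τ hτ0 x y
  rw [hS] at hphi
  have hg := norm_gC_le τ hτ0 x y
  rw [hS] at hg
  have hq : 0 ≤ (1 + 2 / v) * (Real.sqrt 2 / Real.sqrt v) := by positivity
  have hq4 : 0 ≤ 4 / v := by positivity
  constructor
  · have : ‖phiTilde τ x y‖ ≤ 2 * E := by linarith [hP.1]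
    refine this.trans ?_
    gcongr
    linarith
  · have hx : |x| ≤ 1 + b := by
      have : |x| ≤ 1 + x ^ 2 := by
        rw [← sq_abs]; nlinarith [sq_nonneg (|x| - 1), abs_nonneg x]
      nlinarith [sq_nonneg x, sq_nonneg y]
    have hg2 : ‖gC τ x y‖ ≤ (1 + 2 / v) * (Real.sqrt 2 / Real.sqrt v) * E := by
      rw [hg]
      calc _ ≤ (1 + b) * (Real.sqrt 2 / Real.sqrt v) * Real.exp (-(τ.im * b)) := by gcongr
        _ = (Real.sqrt 2 / Real.sqrt v) *
            (Real.exp (-(τ.im * b)) + b * Real.exp (-(τ.im * b))) := by ring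
        _ ≤ (Real.sqrt 2 / Real.sqrt v) * (E + 2 / v * E) := by gcongr
        _ = _ := by ring
    have hc : ‖(2 * Real.pi * Complex.I * (((y : ℂ) ^ 2 - (x : ℂ) ^ 2) / 2))‖ =
        |Real.pi * (y ^ 2 - x ^ 2)| := by
      have : (2 * Real.pi * Complex.I * (((y : ℂ) ^ 2 - (x : ℂ) ^ 2) / 2)) =
        ((Real.pi * (y ^ 2 - x ^ 2) : ℝ) : ℂ) * Complex.I := by push_cast; ring
      rw [this, norm_mul, Complex.norm_I, mul_one, Complex.norm_real, Real.norm_eq_abs]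
    have hA : ‖((2 * Real.pi * Complex.I * (((y : ℂ) ^ 2 - (x : ℂ) ^ 2) / 2)) * phiTilde τ x y)‖
        ≤ 4 / v * E := by
      rw [norm_mul, hc]
      calc _ ≤ _ := mul_le_mul_of_nonneg_left hphi (abs_nonneg _)
        _ ≤ 2 / v * E + b * Real.exp (-(τ.im * b)) := by
          rw [mul_add]
          have := mul_le_mul_of_nonneg_right hab (Real.exp_pos (-(τ.im * b))).le
          linarith [hP.2]
        _ ≤ 2 / v * E + 2 / v * E := by linarith
        _ = _ := by ring
    have hI : ‖(Complex.ofRealCLM.comp Complex.imCLM : ℂ →L[ℝ] ℂ)‖ ≤ 1 := by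
      refine ContinuousLinearMap.opNorm_le_bound _ zero_le_one fun z => ?_
      simpa using Complex.abs_im_le_norm z
    have hI2 : ‖ContinuousLinearMap.id ℝ ℂ‖ ≤ 1 := ContinuousLinearMap.norm_id_le
    unfold dPhi
    refine (norm_add_le _ _).trans ?_
    rw [norm_smul, norm_smul]
    calc _ ≤ (4 / v * E) * 1 + ((1 + 2 / v) * (Real.sqrt 2 / Real.sqrt v) * E) * 1 := by gcongr
      _ ≤ _ := by nlinarith

lemma summable_exp_abs (δ : ℝ) (hδ : 0 < δ) : Summable fun n : ℤ => Real.exp (-(δ * |(n : ℝ)|)) := by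
  have h : Summable fun n : ℕ => Real.exp (-(δ * (n : ℝ))) := by
    have := Real.summable_exp_nat_mul_iff.mpr (neg_lt_zero.mpr hδ)
    refine this.congr fun n => ?_
    congr 1; ring
  apply Summable.of_nat_of_neg <;> simpa using h

lemma summable_lattice (N : ℕ) (hN : 0 < N) (h : ℤ × ℤ) (δ : ℝ) (hδ : 0 < δ) :
    Summable fun p : ℤ × ℤ => Real.exp (-(δ *
      (|((h.1 + N * p.1 : ℤ) : ℝ)| + |((h.2 + N * p.2 : ℤ) : ℝ)|))) := by
  have h1 := (summable_exp_abs δ hδ).mul_of_nonneg (summable_exp_abs δ hδ)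
    (fun _ => (Real.exp_pos _).le) (fun _ => (Real.exp_pos _).le)
  have hi : Function.Injective
      (fun p : ℤ × ℤ => ((h.1 + N * p.1, h.2 + N * p.2) : ℤ × ℤ)) := by
    rintro ⟨a, b⟩ ⟨c, d⟩ hh
    have hN' : (N : ℤ) ≠ 0 := by exact_mod_cast hN.ne'
    simp only [Prod.mk.injEq, add_right_inj, mul_eq_mul_left_iff, hN', or_false] at hh
    exact Prod.ext hh.1 hh.2
  refine (h1.comp_injective hi).congr fun p => ?_
  simp only [Function.comp]
  rw [← Real.exp_add]; congr 1; ring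

lemma iota_bound (N : ℕ) (hN : 0 < N) (t : ℝ) (ht : 0 < t) : ∃ κ : ℝ, 0 < κ ∧ ∀ m n : ℤ,
    κ * (|(m : ℝ)| + |(n : ℝ)|) ≤ (iota N t m n).1 ^ 2 + (iota N t m n).2 ^ 2 ∧
    ((iota N t m n).1 ^ 2 < (iota N t m n).2 ^ 2 →
      κ * (|(m : ℝ)| + |(n : ℝ)|) ≤ (iota N t m n).2 ^ 2 - (iota N t m n).1 ^ 2) := by
  have hNr : (0 : ℝ) < N := by exact_mod_cast hN
  have hi : ∀ m : ℤ, |(m : ℝ)| ≤ (m : ℝ) ^ 2 := fun m => by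
    rw [← Int.cast_abs]
    have h0 : |m| ≤ m ^ 2 := by
      rw [← sq_abs]
      rcases eq_or_ne m 0 with rfl | hm
      · simp
      · nlinarith [Int.one_le_abs hm]
    exact_mod_cast h0
  have hsq : Real.sqrt (2 * N) ^ 2 = 2 * N := Real.sq_sqrt (by positivity)
  refine ⟨min (min (t⁻¹ ^ 2) (t ^ 2)) 1 / N, by positivity, fun m n => ?_⟩
  set μ := min (min (t⁻¹ ^ 2) (t ^ 2)) 1 with hμ
  have hμ0 : 0 < μ := by positivity
  have hμ1 : μ ≤ t⁻¹ ^ 2 := (min_le_left _ _).trans (min_le_left _ _)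
  have hμ2 : μ ≤ t ^ 2 := (min_le_left _ _).trans (min_le_right _ _)
  have hμ3 : μ ≤ 1 := min_le_right _ _
  have e1 : (iota N t m n).1 ^ 2 + (iota N t m n).2 ^ 2 =
      (t⁻¹ ^ 2 * m ^ 2 + t ^ 2 * n ^ 2) / N := by
    unfold iota
    simp only [div_pow, hsq]
    field_simp
    ring
  have e2 : (iota N t m n).2 ^ 2 - (iota N t m n).1 ^ 2 = 2 * (-(m * n)) / N := by
    unfold iota
    simp only [div_pow, hsq]
    field_simp
    ring
  constructor
  · rw [e1, div_mul_eq_mul_div]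
    gcongr
    rw [mul_add]
    gcongr
    · exact hi m
    · exact hi n
  · intro hlt
    rw [← sub_pos, e2] at hlt
    rw [e2, div_mul_eq_mul_div]
    have hmn : (0 : ℝ) < 2 * (-(m * n)) := by
      have := mul_pos hlt hNr
      rwa [div_mul_cancel₀ _ hNr.ne'] at this
    have hm0 : m ≠ 0 := by rintro rfl; simp at hmn
    have hn0 : n ≠ 0 := by rintro rfl; simp at hmn
    have hm1 : (1 : ℝ) ≤ |(m : ℝ)| := by
      rw [← Int.cast_abs]; exact_mod_cast Int.one_le_abs hm0
    have hn1 : (1 : ℝ) ≤ |(n : ℝ)| := by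
      rw [← Int.cast_abs]; exact_mod_cast Int.one_le_abs hn0
    have habs : (-(m * n) : ℝ) = |(m : ℝ)| * |(n : ℝ)| := by
      rw [← abs_mul, abs_of_neg (by linarith)]
    rw [habs]
    refine div_le_div_of_nonneg_right ?_ hNr.le
    calc μ * (|(m : ℝ)| + |(n : ℝ)|) ≤ 1 * (|(m : ℝ)| + |(n : ℝ)|) := by gcongr
      _ ≤ _ := by nlinarith

/-- the series defining `Θ_h(τ,t)` and `Θ̃_h(τ,t)` converge absolutely
for every `τ` in the upper half-plane, and `ξ(Θ̃_h(·,t))(τ) = Θ_h(τ,t)`. -/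
theorem stmt17 (N : ℕ) (hN : 0 < N) (h : ℤ × ℤ) (t : ℝ) (ht : 0 < t) :
    (∀ τ : ℂ, 0 < τ.im →
      Summable (fun p : ℤ × ℤ =>
        phi τ (iota N t ((h.1 + N * p.1 : ℤ) : ℝ) ((h.2 + N * p.2 : ℤ) : ℝ)).1
              (iota N t ((h.1 + N * p.1 : ℤ) : ℝ) ((h.2 + N * p.2 : ℤ) : ℝ)).2) ∧
      Summable (fun p : ℤ × ℤ =>
        phiTilde τ (iota N t ((h.1 + N * p.1 : ℤ) : ℝ) ((h.2 + N * p.2 : ℤ) : ℝ)).1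
                   (iota N t ((h.1 + N * p.1 : ℤ) : ℝ) ((h.2 + N * p.2 : ℤ) : ℝ)).2)) ∧
    (∀ τ : ℂ, 0 < τ.im →
      xi (fun σ => ThetaTilde N h σ t) τ = Theta N h τ t) := by
  obtain ⟨κ, hκ, hι⟩ := iota_bound N hN t ht
  set X : ℤ × ℤ → ℝ := fun p =>
    (iota N t ((h.1 + N * p.1 : ℤ) : ℝ) ((h.2 + N * p.2 : ℤ) : ℝ)).1 with hX
  set Y : ℤ × ℤ → ℝ := fun p =>
    (iota N t ((h.1 + N * p.1 : ℤ) : ℝ) ((h.2 + N * p.2 : ℤ) : ℝ)).2 with hY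
  have key : ∀ v : ℝ, 0 < v → ∃ u : ℤ × ℤ → ℝ, Summable u ∧ ∀ p, ∀ τ : ℂ, v ≤ τ.im →
      ‖phiTilde τ (X p) (Y p)‖ ≤ u p ∧ ‖dPhi τ (X p) (Y p)‖ ≤ u p := by
    intro v hv
    obtain ⟨C, hC, hb⟩ := dPhi_bound v hv
    have hpi := Real.pi_pos
    refine ⟨_, (summable_lattice N hN h (v / 2 * Real.pi * κ) (by positivity)).mul_left C, ?_⟩
    intro p τ hτ
    have h1 := hι (h.1 + N * p.1) (h.2 + N * p.2)
    have h2 := hb (X p) (Y p) _ h1.1 h1.2 τ hτ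
    rw [mul_assoc (v / 2 * Real.pi)]
    exact h2
  have sT : ∀ τ : ℂ, 0 < τ.im → Summable fun p => phiTilde τ (X p) (Y p) := by
    intro τ hτ
    obtain ⟨u, hu, hb⟩ := key τ.im hτ
    exact hu.of_norm_bounded fun p => (hb p τ le_rfl).1
  have sD : ∀ τ : ℂ, 0 < τ.im → Summable fun p => dPhi τ (X p) (Y p) := by
    intro τ hτ
    obtain ⟨u, hu, hb⟩ := key τ.im hτ
    exact hu.of_norm_bounded fun p => (hb p τ le_rfl).2
  have sA : ∀ τ : ℂ, 0 < τ.im → ∀ z : ℂ,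
      HasSum (fun p => dPhi τ (X p) (Y p) z) ((∑' p, dPhi τ (X p) (Y p)) z) := by
    intro τ hτ z
    exact (sD τ hτ).hasSum.mapL (ContinuousLinearMap.apply ℝ ℂ z)
  have sP : ∀ τ : ℂ, 0 < τ.im → HasSum (fun p => phi τ (X p) (Y p))
      (2 * Complex.I * (τ.im : ℂ) * (starRingEnd ℂ) ((1 / 2) *
        ((∑' p, dPhi τ (X p) (Y p)) 1 + Complex.I * (∑' p, dPhi τ (X p) (Y p)) Complex.I))) := by
    intro τ hτ
    have h1 := ((sA τ hτ 1).add ((sA τ hτ Complex.I).mul_left Complex.I)).mul_left (1 / 2)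
    have h2 := (Complex.hasSum_conj'.mpr h1).mul_left (2 * Complex.I * (τ.im : ℂ))
    refine h2.congr_fun ?_
    intro p
    exact phi_eq τ hτ (X p) (Y p)
  refine ⟨fun τ hτ => ⟨(sP τ hτ).summable, sT τ hτ⟩, fun τ hτ => ?_⟩
  have hF : HasFDerivAt (fun σ => ThetaTilde N h σ t) (∑' p, dPhi τ (X p) (Y p)) τ := by
    obtain ⟨u, hu, hb⟩ := key (τ.im / 2) (by positivity)
    have hopen : IsOpen {σ : ℂ | τ.im / 2 < σ.im} := isOpen_lt continuous_const Complex.continuous_im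
    have hconn : IsPreconnected {σ : ℂ | τ.im / 2 < σ.im} :=
      (convex_halfSpace_im_gt _).isPreconnected
    have hmem : τ ∈ {σ : ℂ | τ.im / 2 < σ.im} := by
      simp only [Set.mem_ofPred_eq]; linarith
    have := hasFDerivAt_tsum_of_isPreconnected (f := fun p σ => phiTilde σ (X p) (Y p))
      (f' := fun p σ => dPhi σ (X p) (Y p)) hu hopen hconn
      (fun p σ hσ => phiTilde_hasFDerivAt σ (by simp only [Set.mem_ofPred_eq] at hσ; linarith) _ _)
      (fun p σ hσ => (hb p σ (le_of_lt hσ)).2) hmem (sT τ hτ) hmem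
    exact this.const_add _
  unfold xi dbar
  rw [hF.fderiv]
  exact (sP τ hτ).tsum_eq.symm

end
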